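/- There is a constant c (independent of the game) such that every coordination game without bonuses on an unweighted closed chain of m cycles, each cycle having n nodes, admits, from every joint strategy, a finite improvement path of length at most c·n·m² (hence ending in a Nash equilibrium). -/

import Mathlib

open scoped Classical

namespace CG

/-- Payoff of node `i` in a coordination game on a weighted directed graph
with adjacency `adj` (an edge `j → i` is `adj j i`), edge weights `w`,
bonuses `β`, under the joint strategy `s`. -/
noncomputable def payoff {V M : Type} [Fintype V] (adj : V → V → Prop)
    (w : V → V → ℝ) (β : V → M → ℕ) (s : V → M) (i : V) : ℝ :=
  (∑ j ∈ Finset.univ.filter (fun j => adj j i ∧ s j = s i), w j i) + (β i (s i) : ℝ)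

/-- A joint strategy assigns to every node a colour from its colour set. -/
def Valid {V M : Type} (C : V → Finset M) (s : V → M) : Prop :=
  ∀ i, s i ∈ C i

/-- `s'` is a profitable deviation of the (non-empty) coalition
`K = {i | s i ≠ s' i}` from `s`. -/
def ProfDev {V M : Type} [Fintype V] (adj : V → V → Prop) (w : V → V → ℝ)
    (β : V → M → ℕ) (C : V → Finset M) (s s' : V → M) : Prop :=
  Valid C s' ∧ s ≠ s' ∧
    ∀ i, s i ≠ s' i → payoff adj w β s i < payoff adj w β s' i

/-- A profitable deviation of a single player. -/
def UniDev {V M : Type} [Fintype V] (adj : V → V → Prop) (w : V → V → ℝ)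
    (β : V → M → ℕ) (C : V → Finset M) (s s' : V → M) : Prop :=
  ProfDev adj w β C s s' ∧ ∃ i, ∀ j, j ≠ i → s j = s' j

/-- A Nash equilibrium: no single player has a profitable deviation. -/
def IsNash {V M : Type} [Fintype V] (adj : V → V → Prop) (w : V → V → ℝ)
    (β : V → M → ℕ) (C : V → Finset M) (s : V → M) : Prop :=
  Valid C s ∧ ∀ s', ¬ UniDev adj w β C s s'

/-- A strong equilibrium: no coalition has a profitable deviation. -/
def IsStrong {V M : Type} [Fintype V] (adj : V → V → Prop) (w : V → V → ℝ)
    (β : V → M → ℕ) (C : V → Finset M) (s : V → M) : Prop :=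
  Valid C s ∧ ∀ s', ¬ ProfDev adj w β C s s'

/-- There is a finite improvement path of length `L` starting at `s`
(each step a profitable single-player deviation) ending in a Nash equilibrium. -/
def ImpPath {V M : Type} [Fintype V] (adj : V → V → Prop) (w : V → V → ℝ)
    (β : V → M → ℕ) (C : V → Finset M) (s : V → M) (L : ℕ) : Prop :=
  ∃ σ : ℕ → V → M, σ 0 = s ∧
    (∀ t, t < L → UniDev adj w β C (σ t) (σ (t + 1))) ∧
    IsNash adj w β C (σ L)

/-- There is a finite c-improvement path of length `L` starting at `s`
(each step a profitable coalition deviation) ending in a strong equilibrium. -/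
def CImpPath {V M : Type} [Fintype V] (adj : V → V → Prop) (w : V → V → ℝ)
    (β : V → M → ℕ) (C : V → Finset M) (s : V → M) (L : ℕ) : Prop :=
  ∃ σ : ℕ → V → M, σ 0 = s ∧
    (∀ t, t < L → ProfDev adj w β C (σ t) (σ (t + 1))) ∧
    IsStrong adj w β C (σ L)

/-- Adjacency of the simple cycle `1 → 2 → ⋯ → n → 1` on `Fin n`. -/
def cycAdj (n : ℕ) : Fin n → Fin n → Prop :=
  fun i j => (i.val + 1) % n = j.val

/-- Adjacency of a chain of `m` cycles, each of `n` nodes: `node j i` is the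
`(i+1)`-st node of the `(j+1)`-st cycle (`0`-based indices). -/
def chainAdj {V : Type} (m n : ℕ) (node : ℕ → ℕ → V) : V → V → Prop :=
  fun u v => ∃ j i, j < m ∧ i < n ∧ u = node j i ∧ v = node j ((i + 1) % n)

/-- `node`, `k` describe an open chain of `m ≥ 2` simple cycles, each on `n ≥ 3`
nodes, where consecutive cycles `C_j, C_{j+1}` share exactly the node
`node j 0 = node (j+1) (k j)` (with `1 ≤ k j < n`) and the cycles are
otherwise pairwise disjoint, and every vertex lies on some cycle. -/
def IsOpenChain {V : Type} (m n : ℕ) (node : ℕ → ℕ → V) (k : ℕ → ℕ) : Prop :=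
  2 ≤ m ∧ 3 ≤ n ∧
  (∀ j, j + 1 < m → 1 ≤ k j ∧ k j < n) ∧
  (∀ j, j + 1 < m → node j 0 = node (j + 1) (k j)) ∧
  (∀ j i j' i', j < m → i < n → j' < m → i' < n → node j i = node j' i' →
      (j = j' ∧ i = i') ∨ (j' = j + 1 ∧ i = 0 ∧ i' = k j) ∨
      (j = j' + 1 ∧ i' = 0 ∧ i = k j')) ∧
  (∀ v : V, ∃ j i, j < m ∧ i < n ∧ node j i = v)

/-- As `IsOpenChain`, but additionally the last cycle shares exactly the node
`node (m-1) 0 = node 0 (k (m-1))` with the first one. -/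
def IsClosedChain {V : Type} (m n : ℕ) (node : ℕ → ℕ → V) (k : ℕ → ℕ) : Prop :=
  2 ≤ m ∧ 3 ≤ n ∧
  (∀ j, j < m → 1 ≤ k j ∧ k j < n) ∧
  (∀ j, j + 1 < m → node j 0 = node (j + 1) (k j)) ∧
  node (m - 1) 0 = node 0 (k (m - 1)) ∧
  (∀ j i j' i', j < m → i < n → j' < m → i' < n → node j i = node j' i' →
      (j = j' ∧ i = i') ∨ (j' = j + 1 ∧ i = 0 ∧ i' = k j) ∨
      (j = j' + 1 ∧ i' = 0 ∧ i = k j') ∨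
      (j = m - 1 ∧ j' = 0 ∧ i = 0 ∧ i' = k (m - 1)) ∨
      (j' = m - 1 ∧ j = 0 ∧ i' = 0 ∧ i = k (m - 1))) ∧
  (∀ v : V, ∃ j i, j < m ∧ i < n ∧ node j i = v)

structure RG (S M : Type) where
  m : ℕ
  hm : 2 ≤ m
  x : S → ℕ → M
  l : S → ℕ → M
  r : S → ℕ → M
  C : ℕ → M → Prop
  Rel : S → S → Prop
  hx : ∀ s i, i < m → C i (x s i)
  move : ∀ s i c, i < m → x s i ≠ l s i → x s i ≠ r s i → (c = l s i ∨ c = r s i) → C i c →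
    ∃ s', Rel s s' ∧ x s' i = c ∧ (∀ j, j < m → j ≠ i → x s' j = x s j) ∧
      (∀ j, j < m → l s' j = l s j ∨ (l s' j = c ∧ (j = i + 1 ∨ (j = 0 ∧ i + 1 = m)))) ∧
      (∀ j, j < m → r s' j = r s j ∨ (r s' j = c ∧ (j + 1 = i ∨ (i = 0 ∧ j + 1 = m))))

namespace RG
variable {S M : Type} (g : RG S M)

def Post (i : ℕ) (c : M) (s s' : S) : Prop :=
  g.x s' i = c ∧ (∀ j, j < g.m → j ≠ i → g.x s' j = g.x s j) ∧
      (∀ j, j < g.m → g.l s' j = g.l s j ∨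
        (g.l s' j = c ∧ (j = i + 1 ∨ (j = 0 ∧ i + 1 = g.m)))) ∧
      (∀ j, j < g.m → g.r s' j = g.r s j ∨
        (g.r s' j = c ∧ (j + 1 = i ∨ (i = 0 ∧ j + 1 = g.m))))

/-- position `i` is stable -/
def St (s : S) (i : ℕ) : Prop :=
  g.x s i = g.l s i ∨ g.x s i = g.r s i ∨ (¬ g.C i (g.l s i) ∧ ¬ g.C i (g.r s i))

/-- position `i` is left-settled -/
def Ls (s : S) (i : ℕ) : Prop := g.x s i = g.l s i ∨ ¬ g.C i (g.l s i)

inductive Rch : ℕ → S → S → Prop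
  | refl (k s) : Rch k s s
  | step (k s t u) : g.Rel s t → Rch k t u → Rch (k+1) s u

variable {g}
theorem Rch.mono {k k' : ℕ} {s t : S} (h : g.Rch k s t) (hk : k ≤ k') : g.Rch k' s t := by
  induction h generalizing k' with
  | refl k s => exact Rch.refl _ _
  | step k s t u h1 h2 ih =>
    obtain ⟨q, rfl⟩ : ∃ q, k' = q + 1 := ⟨k' - 1, by omega⟩
    exact Rch.step _ _ _ _ h1 (ih (by omega))

theorem Rch.trans {k k' : ℕ} {s t u : S} (h : g.Rch k s t) (h' : g.Rch k' t u) :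
    g.Rch (k + k') s u := by
  induction h with
  | refl k s => exact h'.mono (by omega)
  | step k s t u h1 h2 ih =>
    have := Rch.step _ _ _ _ h1 (ih h')
    exact this.mono (by omega)

theorem moveL {s : S} {i : ℕ} (hi : i < g.m) (hn : ¬ g.St s i) (hc : g.C i (g.l s i)) :
    ∃ s', g.Rel s s' ∧ g.Post i (g.l s i) s s' := by
  unfold St at hn; push Not at hn
  exact g.move s i _ hi hn.1 hn.2.1 (Or.inl rfl) hc

theorem moveR {s : S} {i : ℕ} (hi : i < g.m) (hn : ¬ g.St s i) (hc : g.C i (g.r s i)) :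
    ∃ s', g.Rel s s' ∧ g.Post i (g.r s i) s s' := by
  unfold St at hn; push Not at hn
  exact g.move s i _ hi hn.1 hn.2.1 (Or.inr rfl) hc

/-- Data kept by moves at positions in `[1,b)`. -/
def Same (g : RG S M) (b : ℕ) (s s' : S) : Prop :=
  g.x s' 0 = g.x s 0 ∧ g.l s' 1 = g.l s 1 ∧ g.r s' (g.m - 1) = g.r s (g.m - 1) ∧
    (b < g.m → g.x s' (g.m-1) = g.x s (g.m-1) ∧ g.l s' 0 = g.l s 0)

theorem Same.trans {b : ℕ} {s t u : S} (h : g.Same b s t) (h' : g.Same b t u) : g.Same b s u := by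
  unfold Same at *; grind

theorem Same.of_post {b i : ℕ} {c : M} {s t : S} (h : g.Post i c s t) (h1 : 1 ≤ i) (h2 : i < b)
    (hb : b ≤ g.m) : g.Same b s t := by
  have := g.hm
  obtain ⟨h3, h4, h5, h6⟩ := h
  have a1 := h4 0
  have a2 := h4 (g.m - 1)
  have a3 := h5 0
  have a4 := h5 1
  have a5 := h6 (g.m - 1)
  unfold Same
  grind

/-- left sweep -/
theorem sweep {b : ℕ} (hb : b ≤ g.m) (a : ℕ) (ha : 1 ≤ a) : ∀ (j : ℕ) (s : S), a ≤ j + 1 → j < b →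
    (∀ i, j < i → i < b → g.St s i) →
    (∀ i, a ≤ i → i ≤ j → g.Ls s i ∧ (g.St s i ∨ g.r s i = g.x s (i+1) ∨
      (i = j ∧ g.x s (i+1) = g.r s (i+1)))) →
    ∃ s', g.Rch (j + 1 - a) s s' ∧ (∀ i, a ≤ i → i < b → g.St s' i) ∧ g.Same b s s' := by
  have hm := g.hm
  intro j
  induction j with
  | zero =>
    intro s h1 h2 h3 h4
    exact ⟨s, Rch.refl _ _, fun i hi hi' => h3 i (by omega) hi', by unfold Same; simp⟩
  | succ j ih =>
    intro s h1 h2 h3 h4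
    by_cases haj : a = j + 1 + 1
    · exact ⟨s, Rch.refl _ _, fun i hi hi' => h3 i (by omega) hi', by unfold Same; simp⟩
    by_cases hs : g.St s (j+1)
    · obtain ⟨s', r1, r2, r3⟩ := ih s (by omega) (by omega) (by grind) (by grind)
      exact ⟨s', r1.mono (by omega), r2, r3⟩
    · have hls := (h4 (j+1) (by omega) le_rfl)
      have hr : g.C (j+1) (g.r s (j+1)) := by
        have := hls.1
        unfold St at hs; unfold Ls at this; grind
      obtain ⟨t, t1, t2⟩ := moveR (by omega) hs hr
      have sm := Same.of_post t2 (by omega) h2 hb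
      obtain ⟨p1, p2, p3, p4⟩ := t2
      obtain ⟨s', r1, r2, r3⟩ := ih t (by omega) (by omega) (by
          intro i hi hi'
          have q1 := p2 i (by omega)
          have q2 := p3 i (by omega)
          have q3 := p4 i (by omega)
          by_cases hi2 : i = j + 1
          · subst hi2; unfold St; grind
          · have := h3 i (by omega) hi'
            unfold St at this ⊢; grind) (by
          intro i hi hi'
          have q1 := p2 i (by omega)
          have q2 := p3 i (by omega)
          have q3 := p4 i (by omega)
          have q4 := p2 (i+1) (by omega)
          have q5 := p4 (i+1) (by omega)
          have := h4 i (by omega) (by omega)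
          unfold St Ls at *; grind)
      exact ⟨s', (Rch.step _ _ _ _ t1 r1).mono (by omega), r2, sm.trans r3⟩

/-- right wave -/
theorem wave {b : ℕ} (hb : b ≤ g.m) (a : ℕ) (ha : 1 ≤ a) : ∀ (n i : ℕ) (s : S), i + n = b → a ≤ i →
    (∀ j, i < j → j < b → g.St s j) →
    (∀ j, a ≤ j → j < i → g.Ls s j ∧ (g.St s j ∨ (g.r s j = g.x s (j+1) ∧ j + 1 < i))) →
    ∃ s', g.Rch (n + b) s s' ∧ (∀ i, a ≤ i → i < b → g.St s' i) ∧ g.Same b s s' := by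
  have hm := g.hm
  intro n
  induction n with
  | zero =>
    intro i s h0 h1 h2 h3
    obtain ⟨s', r1, r2, r3⟩ := sweep hb a ha (i-1) s (by omega) (by omega) (by grind) (by
      intro j hj hj'
      have := h3 j hj (by omega)
      grind)
    exact ⟨s', r1.mono (by omega), r2, r3⟩
  | succ n ih =>
    intro i s h0 h1 h2 h3
    by_cases hs : g.St s i
    · obtain ⟨s', r1, r2, r3⟩ := sweep hb a ha (i-1) s (by omega) (by omega) (by grind) (by
        intro j hj hj'
        have := h3 j hj (by omega)
        grind)
      exact ⟨s', r1.mono (by omega), r2, r3⟩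
    · have : ∃ c t, g.Rel s t ∧ g.Post i c s t ∧ (c = g.l s i ∨ (c = g.r s i ∧ ¬ g.C i (g.l s i))) := by
        by_cases hl : g.C i (g.l s i)
        · obtain ⟨t, t1, t2⟩ := moveL (by omega) hs hl
          exact ⟨_, t, t1, t2, Or.inl rfl⟩
        · have hr : g.C i (g.r s i) := by unfold St at hs; grind
          obtain ⟨t, t1, t2⟩ := moveR (by omega) hs hr
          exact ⟨_, t, t1, t2, Or.inr ⟨rfl, hl⟩⟩
      obtain ⟨c, t, t1, t2, hc⟩ := this
      have sm := Same.of_post t2 (by omega) (by omega) hb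
      obtain ⟨p1, p2, p3, p4⟩ := t2
      obtain ⟨s', r1, r2, r3⟩ := ih (i+1) t (by omega) (by omega) (by
          intro j hj hj'
          have q1 := p2 j (by omega)
          have q2 := p3 j (by omega)
          have q3 := p4 j (by omega)
          have := h2 j (by omega) hj'
          unfold St at this ⊢; grind) (by
          intro j hj hj'
          have q1 := p2 j (by omega)
          have q2 := p3 j (by omega)
          have q3 := p4 j (by omega)
          have q4 := p2 (j+1)
          by_cases hji : j = i
          · subst hji; unfold St Ls; grind
          have := h3 j (by omega) (by omega)
          unfold St Ls at *; grind)
      exact ⟨s', (Rch.step _ _ _ _ t1 r1).mono (by omega), r2, sm.trans r3⟩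

theorem line {b : ℕ} (hb : b ≤ g.m) (s : S) : ∃ s', g.Rch (2 * (g.m * g.m)) s s' ∧
    (∀ i, 1 ≤ i → i < b → g.St s' i) ∧ g.Same b s s' := by
  have key : ∀ n a, a + n = b → 1 ≤ a → ∃ s', g.Rch (n * (2 * g.m)) s s' ∧
    (∀ i, a ≤ i → i < b → g.St s' i) ∧ g.Same b s s' := by
    intro n
    induction n with
    | zero =>
      intro a h1 h2
      exact ⟨s, Rch.refl _ _, fun i hi hi' => by omega, by unfold Same; simp⟩
    | succ n ih =>
      intro a h1 h2
      obtain ⟨t, t1, t2, t3⟩ := ih (a+1) (by omega) (by omega)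
      obtain ⟨u, u1, u2, u3⟩ := wave hb a h2 (n+1) a t (by omega) le_rfl (by grind) (by grind)
      refine ⟨u, (t1.trans u1).mono ?_, u2, t3.trans u3⟩
      have := g.hm
      have e : (n+1) * (2 * g.m) = n * (2 * g.m) + 2 * g.m := by ring
      omega
  by_cases h : 1 ≤ b
  · obtain ⟨t, t1, t2, t3⟩ := key (b-1) 1 (by omega) le_rfl
    refine ⟨t, t1.mono ?_, t2, t3⟩
    have : (b-1) * (2 * g.m) ≤ g.m * (2 * g.m) := Nat.mul_le_mul_right _ (by omega)
    linarith
  · exact ⟨s, Rch.refl _ _, fun i hi hi' => by omega, by unfold Same; simp⟩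


def Done (g : RG S M) (K : ℕ) (s : S) : Prop := ∃ s', g.Rch K s s' ∧ ∀ i, i < g.m → g.St s' i

theorem Done.mono {K K' : ℕ} {s : S} (h : g.Done K s) (hk : K ≤ K') : g.Done K' s := by
  obtain ⟨t, t1, t2⟩ := h
  exact ⟨t, t1.mono hk, t2⟩

theorem Done.of_rch {K K' : ℕ} {s t : S} (h : g.Rch K s t) (h' : g.Done K' t) :
    g.Done (K + K') s := by
  obtain ⟨u, u1, u2⟩ := h'
  exact ⟨u, h.trans u1, u2⟩

theorem Done.of_rel {K' : ℕ} {s t : S} (h : g.Rel s t) (h' : g.Done K' t) :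
    g.Done (K' + 1) s := by
  obtain ⟨u, u1, u2⟩ := h'
  exact ⟨u, Rch.step _ _ _ _ h u1, u2⟩

def ri (m b i : ℕ) : ℕ := if b + i < m then b + i else b + i - m

/-- rotation -/
def rot (g : RG S M) (b : ℕ) (hb : b < g.m) : RG S M where
  m := g.m
  hm := g.hm
  x s i := g.x s (ri g.m b i)
  l s i := g.l s (ri g.m b i)
  r s i := g.r s (ri g.m b i)
  C i := g.C (ri g.m b i)
  Rel := g.Rel
  hx s i hi := g.hx s _ (by unfold ri; split <;> omega)
  move := by
    have hm := g.hm
    intro s i c hi h1 h2 h3 h4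
    obtain ⟨t, t1, t2, t3, t4, t5⟩ := g.move s (ri g.m b i) c (by unfold ri; split <;> omega) h1 h2 h3 h4
    have hlt : ∀ j, j < g.m → ri g.m b j < g.m := by intro j hj; unfold ri; split <;> omega
    refine ⟨t, t1, t2, ?_, ?_, ?_⟩
    · intro j hj hji
      apply t3 _ (hlt j hj)
      unfold ri; split <;> split <;> omega
    · intro j hj
      rcases t4 _ (hlt j hj) with h | ⟨h, h'⟩
      · exact Or.inl h
      · refine Or.inr ⟨h, ?_⟩
        unfold ri at h'; split at h' <;> split at h' <;> omega
    · intro j hj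
      rcases t5 _ (hlt j hj) with h | ⟨h, h'⟩
      · exact Or.inl h
      · refine Or.inr ⟨h, ?_⟩
        unfold ri at h'; split at h' <;> split at h' <;> omega

/-- reflection -/
def mir (g : RG S M) : RG S M where
  m := g.m
  hm := g.hm
  x s i := g.x s (g.m - 1 - i)
  l s i := g.r s (g.m - 1 - i)
  r s i := g.l s (g.m - 1 - i)
  C i := g.C (g.m - 1 - i)
  Rel := g.Rel
  hx s i hi := g.hx s _ (by omega)
  move := by
    have hm := g.hm
    intro s i c hi h1 h2 h3 h4
    obtain ⟨t, t1, t2, t3, t4, t5⟩ := g.move s (g.m - 1 - i) c (by omega) h2 h1 h3.symm h4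
    refine ⟨t, t1, t2, ?_, ?_, ?_⟩
    · intro j hj hji
      apply t3 _ (by omega) (by omega)
    · intro j hj
      rcases t5 (g.m - 1 - j) (by omega) with h | ⟨h, h'⟩
      · exact Or.inl h
      · exact Or.inr ⟨h, by omega⟩
    · intro j hj
      rcases t4 (g.m - 1 - j) (by omega) with h | ⟨h, h'⟩
      · exact Or.inl h
      · exact Or.inr ⟨h, by omega⟩

theorem Rch.of_rot {b : ℕ} {hb : b < g.m} {K : ℕ} {s t : S} (h : (g.rot b hb).Rch K s t) :
    g.Rch K s t := by
  induction h with
  | refl k s => exact Rch.refl _ _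
  | step k s t u h1 h2 ih => exact Rch.step _ _ _ _ h1 ih

theorem Rch.of_mir {K : ℕ} {s t : S} (h : g.mir.Rch K s t) : g.Rch K s t := by
  induction h with
  | refl k s => exact Rch.refl _ _
  | step k s t u h1 h2 ih => exact Rch.step _ _ _ _ h1 ih

theorem Done.of_rot {b : ℕ} {hb : b < g.m} {K : ℕ} {s : S} (h : (g.rot b hb).Done K s) :
    g.Done K s := by
  obtain ⟨t, t1, t2⟩ := h
  refine ⟨t, t1.of_rot, fun i hi => ?_⟩
  have h2 := t2 (if b ≤ i then i - b else i + g.m - b) (by change _ < g.m; split <;> omega)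
  have e : ri g.m b (if b ≤ i then i - b else i + g.m - b) = i := by
    unfold ri; split <;> split <;> omega
  unfold St rot at h2
  simp only [e] at h2
  exact h2

theorem mir_St {s : S} {i : ℕ} : g.mir.St s i ↔ g.St s (g.m - 1 - i) := by
  unfold St mir; grind

theorem Done.of_mir {K : ℕ} {s : S} (h : g.mir.Done K s) : g.Done K s := by
  obtain ⟨t, t1, t2⟩ := h
  refine ⟨t, t1.of_mir, fun i hi => ?_⟩
  have h2 := t2 (g.m - 1 - i) (by change _ < g.m; omega)
  rw [mir_St] at h2
  rwa [show g.m - 1 - (g.m - 1 - i) = i by omega] at h2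

theorem sq_facts (g : RG S M) : 2 * g.m ≤ g.m * g.m ∧ 4 ≤ g.m * g.m := by
  have := g.hm
  constructor <;> nlinarith

theorem ZL (s : S) (h1 : g.x s 0 = g.l s 0) (h2 : g.r s (g.m-1) = g.x s 0)
    (h3 : g.C (g.m-1) (g.x s 0)) : g.Done (5 * (g.m * g.m)) s := by
  have hm := g.hm
  have hN := g.sq_facts
  obtain ⟨t, t1, t2, t3⟩ := g.line (b := g.m - 1) (by omega) s
  obtain ⟨c1, c2, c3, c4⟩ := t3
  obtain ⟨c4, c5⟩ := c4 (by omega)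
  by_cases hs : g.St t (g.m - 1)
  · refine ⟨t, t1.mono (by omega), fun i hi => ?_⟩
    by_cases hi0 : i = 0
    · subst hi0; left; grind
    · by_cases hi1 : i = g.m - 1
      · subst hi1; exact hs
      · exact t2 i (by omega) (by omega)
  · obtain ⟨u, u1, p1, p2, p3, p4⟩ := moveR (by omega) hs (by grind)
    obtain ⟨v, v1, v2, v3⟩ := g.line (b := g.m - 1) (by omega) u
    obtain ⟨d1, d2, d3, d4⟩ := v3
    obtain ⟨d4, d5⟩ := d4 (by omega)
    have q1 := p2 0 (by omega)
    have q2 := p3 0 (by omega)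
    have q3 := p4 (g.m - 1) (by omega)
    refine ⟨v, (t1.trans (Rch.step _ _ _ _ u1 v1)).mono (by omega), fun i hi => ?_⟩
    by_cases hi0 : i = 0
    · subst hi0; left; grind
    · by_cases hi1 : i = g.m - 1
      · subst hi1; right; left; grind
      · exact v2 i (by omega) (by omega)

theorem ZR (s : S) (i j : ℕ) (hi : i < g.m) (hj : j < g.m) (hij : j = i + 1 ∨ (j = 0 ∧ i + 1 = g.m))
    (h1 : g.x s i = g.r s i) (h2 : g.l s j = g.x s i)
    (h3 : g.C j (g.x s i)) : g.Done (5 * (g.m * g.m)) s := by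
  have hm := g.hm
  have e1 : ri g.m j (g.m - 1) = i := by unfold ri; split <;> omega
  have e2 : ri g.m j 0 = j := by unfold ri; split <;> omega
  refine Done.of_rot (b := j) (hb := hj) (Done.of_mir (ZL s ?_ ?_ ?_))
  · change g.x s (ri g.m j (g.m - 1 - 0)) = g.r s (ri g.m j (g.m - 1 - 0))
    rw [Nat.sub_zero, e1, h1]
  · change g.l s (ri g.m j (g.m - 1 - (g.m - 1))) = g.x s (ri g.m j (g.m - 1 - 0))
    rw [Nat.sub_zero, e1, Nat.sub_self, e2, h2]
  · change g.C (ri g.m j (g.m - 1 - (g.m - 1))) (g.x s (ri g.m j (g.m - 1 - 0)))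
    rw [Nat.sub_zero, e1, Nat.sub_self, e2]; exact h3

/-- the left wave with one colour when everything is left-settled -/
theorem LW (e : M) : ∀ (j : ℕ) (s : S), j + 1 < g.m →
    (∀ i, j < i → i < g.m → g.x s i = e) → (∀ i, i < g.m → g.Ls s i) →
    (∀ i, i < g.m → i ≠ j → g.St s i) → (g.St s j ∨ g.r s j = e) → g.Done (j+1) s := by
  have hm := g.hm
  intro j
  induction j with
  | zero =>
    intro s h0 h1 h2 h3 h4
    by_cases hs : g.St s 0
    · exact ⟨s, Rch.refl _ _, by grind⟩
    have hr : g.C 0 (g.r s 0) := by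
      have := h2 0; unfold St Ls at *; grind
    obtain ⟨u, u1, p1, p2, p3, p4⟩ := moveR (by omega) hs hr
    refine ⟨u, Rch.step _ _ _ _ u1 (Rch.refl _ _), fun i hi => ?_⟩
    have q1 := p2 i hi
    have q2 := p3 i hi
    have q3 := p4 i hi
    have q4 := h1 i
    have q5 := h3 i hi
    unfold St at *; grind
  | succ j ih =>
    intro s h0 h1 h2 h3 h4
    by_cases hs : g.St s (j+1)
    · exact ⟨s, Rch.refl _ _, by grind⟩
    have hr : g.C (j+1) (g.r s (j+1)) := by
      have := h2 (j+1); unfold St Ls at *; grind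
    have hl : ¬ g.C (j+1) (g.l s (j+1)) := by
      have := h2 (j+1); unfold St Ls at *; grind
    obtain ⟨u, u1, p1, p2, p3, p4⟩ := moveR (by omega) hs hr
    refine Done.of_rel u1 (ih u (by omega) ?_ ?_ ?_ ?_)
    · intro i hi hi'
      have q1 := p2 i hi'
      grind
    · intro i hi
      have q1 := p2 i hi
      have q2 := p3 i hi
      have q5 := h2 i hi
      have q4 := h1 i
      unfold Ls at *; grind
    · intro i hi hi'
      have q1 := p2 i hi
      have q2 := p3 i hi
      have q3 := p4 i hi
      have q4 := h1 i
      have q5 := h3 i hi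
      unfold St at *; grind
    · have q1 := p2 j (by omega)
      have q2 := p3 j (by omega)
      have q3 := p4 j (by omega)
      have q5 := h3 j (by omega)
      unfold St at *; grind

/-- left sweep in the front procedure -/
theorem WS (q : ℕ) (hq : q + 1 < g.m) : ∀ (j : ℕ) (s : S), j ≤ q →
    g.x s j = g.r s j → ¬ g.C 0 (g.l s 0) →
    (∀ i, i ≤ q → g.Ls s i) → (∀ i, i < g.m → i + 1 ≠ j → i ≠ q + 1 → g.St s i) →
    (g.St s (q+1) ∨ ¬ g.C (q+1) (g.l s (q+1))) →
    (g.Ls s (g.m - 1)) → (q + 1 < g.m - 1 → g.x s (g.m-1) = g.l s (g.m-1)) →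
    g.Done (5 * (g.m * g.m) + j) s ∨ ∃ t, g.Rch j s t ∧ ¬ g.C 0 (g.l t 0) ∧ (∀ i, i ≤ q → g.Ls t i)
      ∧ (∀ i, i < g.m → i ≠ q + 1 → g.St t i) ∧ (g.St t (q+1) ∨ ¬ g.C (q+1) (g.l t (q+1))) ∧
      (q + 1 < g.m - 1 → g.x t (g.m-1) = g.l t (g.m-1)) := by
  have hm := g.hm
  intro j
  induction j with
  | zero =>
    intro s h0 h1 h2 h3 h4 h5 h6 h7
    exact Or.inr ⟨s, Rch.refl _ _, h2, h3, by grind, h5, h7⟩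
  | succ j ih =>
    intro s h0 h1 h2 h3 h4 h5 h6 h7
    by_cases hs : g.St s j
    · exact Or.inr ⟨s, Rch.refl _ _, h2, h3, by grind, h5, h7⟩
    have hr : g.C j (g.r s j) := by
      have := h3 j; unfold St Ls at *; grind
    have hl : ¬ g.C j (g.l s j) := by
      have := h3 j; unfold St Ls at *; grind
    obtain ⟨u, u1, p1, p2, p3, p4⟩ := moveR (by omega) hs hr
    have p4j := p4 j (by omega)
    by_cases hz : g.l u (j+1) = g.x u j ∧ g.C (j+1) (g.x u j)
    · left
      refine Done.mono (Done.of_rel u1 (ZR u j (j+1) (by omega) (by omega) (Or.inl rfl) ?_ hz.1 hz.2)) (by omega)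
      grind
    have e1 : g.x u j = g.r u j := by grind
    have e2 : ¬ g.C 0 (g.l u 0) := by
      have := p3 0; grind
    have e3 : ∀ i, i ≤ q → g.Ls u i := by
      intro i hi
      have q1 := p2 i (by omega)
      have q2 := p3 i (by omega)
      have q5 := h3 i hi
      unfold Ls at *; grind
    have e4 : ∀ i, i < g.m → i + 1 ≠ j → i ≠ q + 1 → g.St u i := by
      intro i hi hi' hi2
      have q1 := p2 i hi
      have q2 := p3 i hi
      have q3 := p4 i hi
      have q5 := h4 i hi
      by_cases i = j
      · unfold St; grind
      by_cases i = j + 1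
      · unfold St; grind
      by_cases i = g.m - 1
      · unfold St; grind
      unfold St at *; grind
    have e5 : (g.St u (q+1) ∨ ¬ g.C (q+1) (g.l u (q+1))) := by
      have q1 := p2 (q+1) (by omega)
      have q2 := p3 (q+1) (by omega)
      have q3 := p4 (q+1) (by omega)
      unfold St Ls at *; grind
    have e6 : (g.Ls u (g.m - 1)) := by
      have q1 := p2 (g.m - 1) (by omega)
      have q2 := p3 (g.m - 1) (by omega)
      unfold Ls at *; grind
    have e7 : (q + 1 < g.m - 1 → g.x u (g.m-1) = g.l u (g.m-1)) := by
      have q1 := p2 (g.m - 1) (by omega)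
      have q2 := p3 (g.m - 1) (by omega)
      grind
    rcases ih u (by omega) e1 e2 e3 e4 e5 e6 e7 with h | ⟨t, t1, t2⟩
    · left; exact (Done.of_rel u1 h).mono (by omega)
    · right; exact ⟨t, (Rch.step _ _ _ _ u1 t1), t2⟩

theorem WF : ∀ (n q : ℕ) (s : S), q + n + 1 = g.m → ¬ g.C 0 (g.l s 0) → ¬ g.C q (g.l s q) →
    (∀ i, i < q → g.Ls s i) → (∀ i, i < g.m → i ≠ q → g.St s i) →
    (q < g.m - 1 → g.x s (g.m-1) = g.l s (g.m-1)) →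
    g.Done (5 * (g.m * g.m) + (n + 1) * (2 * g.m)) s := by
  have hm := g.hm
  intro n
  induction n with
  | zero =>
    intro q s h0 h1 h2 h3 h4 h5
    by_cases hs : g.St s q
    · exact ⟨s, Rch.refl _ _, by grind⟩
    have hr : g.C q (g.r s q) := by unfold St at *; grind
    obtain ⟨u, u1, p1, p2, p3, p4⟩ := moveR (by omega) hs hr
    have p3q := p3 q (by omega)
    have p4q := p4 q (by omega)
    by_cases hz : g.l u 0 = g.x u q ∧ g.C 0 (g.x u q)
    · refine Done.mono (Done.of_rel u1 (ZR u q 0 (by omega) (by omega) (Or.inr ⟨rfl, by omega⟩) ?_ hz.1 hz.2)) (by omega)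
      grind
    have hx0 := g.hx s 0 (by omega)
    refine Done.mono (Done.of_rel u1 (LW (g.r s q) (q-1) u (by omega) ?_ ?_ ?_ ?_)) (K := q - 1 + 1 + 1) (by omega)
    · intro i hi hi'
      have : i = q := by omega
      grind
    · intro i hi
      have q1 := p2 i hi
      have q2 := p3 i hi
      have q5 := h3 i
      unfold Ls at *; grind
    · intro i hi hi'
      have q1 := p2 i hi
      have q2 := p3 i hi
      have q3 := p4 i hi
      have q5 := h4 i hi
      unfold St at *; grind
    · have q1 := p2 (q-1) (by omega)
      have q2 := p3 (q-1) (by omega)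
      have q3 := p4 (q-1) (by omega)
      have q5 := h4 (q-1) (by omega)
      unfold St at *; grind
  | succ n ih =>
    intro q s h0 h1 h2 h3 h4 h5
    have h5 := h5 (by omega)
    by_cases hs : g.St s q
    · exact ⟨s, Rch.refl _ _, by grind⟩
    have hr : g.C q (g.r s q) := by unfold St at *; grind
    obtain ⟨u, u1, p1, p2, p3, p4⟩ := moveR (by omega) hs hr
    have p3q := p3 q (by omega)
    have p4q := p4 q (by omega)
    have bd : (n + 1 + 1) * (2 * g.m) = (n+1) * (2 * g.m) + 2 * g.m := by ring
    by_cases hz : g.l u (q+1) = g.x u q ∧ g.C (q+1) (g.x u q)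
    · refine Done.mono (Done.of_rel u1 (ZR u q (q+1) (by omega) (by omega) (Or.inl rfl) ?_ hz.1 hz.2)) (by omega)
      grind
    have e2 : ¬ g.C 0 (g.l u 0) := by
      have := p3 0; grind
    have e3 : ∀ i, i ≤ q → g.Ls u i := by
      intro i hi
      have q1 := p2 i (by omega)
      have q2 := p3 i (by omega)
      have q5 := h3 i
      unfold Ls at *; grind
    have e4 : ∀ i, i < g.m → i + 1 ≠ q → i ≠ q + 1 → g.St u i := by
      intro i hi hi' hi2
      have q1 := p2 i hi
      have q2 := p3 i hi
      have q3 := p4 i hi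
      have q5 := h4 i hi
      by_cases i = q
      · unfold St; grind
      by_cases i = g.m - 1
      · unfold St; grind
      unfold St at *; grind
    have e5 : (g.St u (q+1) ∨ ¬ g.C (q+1) (g.l u (q+1))) := by
      have q1 := p2 (q+1) (by omega)
      have q2 := p3 (q+1) (by omega)
      have q3 := p4 (q+1) (by omega)
      have q5 := h4 (q+1) (by omega)
      by_cases q + 1 = g.m - 1
      · unfold St; grind
      unfold St at *; grind
    have e6 : (g.Ls u (g.m - 1)) := by
      have q1 := p2 (g.m - 1) (by omega)
      have q2 := p3 (g.m - 1) (by omega)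
      unfold Ls; grind
    have e7 : (q + 1 < g.m - 1 → g.x u (g.m-1) = g.l u (g.m-1)) := by
      have q1 := p2 (g.m - 1) (by omega)
      have q2 := p3 (g.m - 1) (by omega)
      grind
    rcases WS q (by omega) q u le_rfl (by grind) e2 e3 e4 e5 e6 e7 with h | ⟨t, t1, t2, t3, t4, t5, t6⟩
    · exact (Done.of_rel u1 h).mono (by omega)
    · by_cases hst : g.St t (q+1)
      · exact Done.mono (Done.of_rel u1 ⟨t, t1, by grind⟩) (by omega)
      · exact Done.mono (Done.of_rel u1 (Done.of_rch t1
          (ih (q+1) t (by omega) t2 (by grind) (by grind) t4 t6))) (by omega)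

theorem WFrot (p : ℕ) (s : S) (hp1 : 1 ≤ p) (hp : p < g.m) (h1 : ¬ g.C p (g.l s p))
    (h4 : ∀ i, i < g.m → i ≠ p → g.St s i) (h5 : g.x s (p-1) = g.l s (p-1)) :
    g.Done (7 * (g.m * g.m)) s := by
  have hm := g.hm
  have e1 : ri g.m p (g.m - 1) = p - 1 := by unfold ri; split <;> omega
  have e2 : ri g.m p 0 = p := by unfold ri; split <;> omega
  refine Done.mono (Done.of_rot (b := p) (hb := hp) (WF (g.m - 1) 0 s ?_ ?_ ?_ ?_ ?_ ?_)) ?_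
  · change 0 + (g.m - 1) + 1 = g.m; omega
  · change ¬ g.C (ri g.m p 0) (g.l s (ri g.m p 0)); rwa [e2]
  · change ¬ g.C (ri g.m p 0) (g.l s (ri g.m p 0)); rwa [e2]
  · intro i hi; omega
  · intro i hi hi0
    change i < g.m at hi
    exact h4 (ri g.m p i) (by unfold ri; split <;> omega) (by unfold ri; split <;> omega)
  · intro _
    change g.x s (ri g.m p (g.m - 1)) = g.l s (ri g.m p (g.m - 1)); rwa [e1]
  · change 5 * (g.m * g.m) + (g.m - 1 + 1) * (2 * g.m) ≤ _
    rw [Nat.sub_add_cancel (by omega)]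
    apply le_of_eq; ring

theorem PW (d : M) : ∀ (n k : ℕ) (s : S), k + n = g.m → 1 ≤ k → (∀ i, i < k → g.x s i = d) →
    g.l s 0 = d → g.l s (k-1) = d → (∀ i, i < g.m → i ≠ k → g.St s i) →
    (k < g.m → g.St s k ∨ g.l s k = d) → g.Done (7 * (g.m * g.m) + n) s := by
  have hm := g.hm
  intro n
  induction n with
  | zero =>
    intro k s h0 h1 h2 h3 h4 h5 h6
    exact ⟨s, Rch.refl _ _, by grind⟩
  | succ n ih =>
    intro k s h0 h1 h2 h3 h4 h5 h6
    by_cases hs : g.St s k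
    · exact ⟨s, Rch.refl _ _, by clear ih; grind⟩
    have hd : g.l s k = d := (h6 (by omega)).resolve_left hs
    clear h6
    by_cases hl : g.C k (g.l s k)
    · obtain ⟨u, u1, p1, p2, p3, p4⟩ := moveL (by omega) hs hl
      rw [hd] at p1 p3 p4
      have e1 : ∀ i, i < k + 1 → g.x u i = d := by
        clear ih
        intro i hi
        by_cases hik : i = k
        · rw [hik, p1]
        · rw [p2 i (by omega) hik]; exact h2 i (by omega)
      have e2 : g.l u 0 = d := by
        rcases p3 0 (by omega) with h | h
        · rw [h, h3]
        · exact h.1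
      have e3 : g.l u (k + 1 - 1) = d := by
        rw [Nat.add_sub_cancel]
        rcases p3 k (by omega) with h | h
        · rw [h, hd]
        · exact h.1
      have e4 : ∀ i, i < g.m → i ≠ k + 1 → g.St u i := by
        clear ih
        intro i hi hi'
        have q2 := p3 i hi
        have q3 := p4 i hi
        by_cases hik : i < k
        · have q5 := h5 i hi (by omega)
          have q6 := e1 i (by omega)
          have q7 := h2 i hik
          unfold St at q5 ⊢
          clear h5 p2 p3 p4 e1 h2
          rw [q6]; rw [q7] at q5
          rcases q2 with h | h <;> rcases q3 with h' | h'
          · rwa [h, h']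
          · right; left; exact h'.1.symm
          · left; exact h.1.symm
          · left; exact h.1.symm
        by_cases hik2 : i = k
        · left; rw [hik2, p1]; rw [Nat.add_sub_cancel] at e3; exact e3.symm
        have q5 := h5 i hi hik2
        have q1 := p2 i hi hik2
        have q2' : g.l u i = g.l s i ∨ (g.l u i = d ∧ i = 0) := by
          rcases q2 with h | h
          · exact Or.inl h
          · right; exact ⟨h.1, by omega⟩
        rcases q2' with h | h
        · rcases q3 with h' | h'
          · unfold St at q5 ⊢; rwa [q1, h, h']
          · exfalso; omega
        · exfalso; omega
      have e5 : k + 1 < g.m → g.St u (k+1) ∨ g.l u (k+1) = d := by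
        clear ih
        intro hk
        have q1 := p2 (k+1) hk (by omega)
        have q2 := p3 (k+1) hk
        have q3 := p4 (k+1) hk
        have q5 := h5 (k+1) hk (by omega)
        rcases q2 with h | h
        · rcases q3 with h' | h'
          · left; unfold St at q5 ⊢; rwa [q1, h, h']
          · exfalso; omega
        · right; exact h.1
      exact Done.of_rel u1 (ih (k+1) u (by omega) (by omega) e1 e2 e3 e4 e5)
    · refine (WFrot k s h1 (by omega) hl h5 ?_).mono (by omega)
      rw [h2 _ (by omega), h4]

theorem W0 (s : S) (h1 : g.x s 0 = g.l s 0) (h2 : ∀ i, i < g.m → i ≠ 1 → g.St s i)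
    (h3 : g.St s 1 ∨ g.l s 1 = g.x s 0) : g.Done (8 * (g.m * g.m)) s := by
  have hm := g.hm
  have := g.sq_facts
  refine (PW (g.x s 0) (g.m - 1) 1 s (by omega) le_rfl ?_ h1.symm h1.symm h2 (fun _ => h3)).mono (by omega)
  intro i hi
  have : i = 0 := by omega
  rw [this]

/-- First outcome of a left move of the base. -/
theorem baseL (s : S) (h2 : ∀ i, i < g.m → i ≠ 0 → g.St s i) (h0 : ¬ g.St s 0)
    (hc : g.C 0 (g.l s 0)) : g.Done (9 * (g.m * g.m)) s ∨
    ∃ t, g.Rel s t ∧ g.r t (g.m - 1) = g.x t 0 ∧ ¬ g.C (g.m-1) (g.x t 0) ∧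
      (g.C (g.m - 1) (g.r s (g.m - 1))) ∧ g.r t 0 = g.r s 0 ∧
      (g.l t 1 = g.l s 1 ∨ g.l t 1 = g.x t 0) := by
  have hm := g.hm
  have hN := g.sq_facts
  obtain ⟨u, u1, p1, p2, p3, p4⟩ := moveL (by omega) h0 hc
  have a1 := p3 0 (by omega)
  have a2 := p2 1 (by omega)
  have a3 := p3 1 (by omega)
  have a4 := p4 1 (by omega)
  have b2 := p2 (g.m - 1) (by omega)
  have b3 := p3 (g.m - 1) (by omega)
  have b4 := p4 (g.m - 1) (by omega)
  by_cases hz : g.r u (g.m - 1) = g.x u 0 ∧ g.C (g.m - 1) (g.x u 0)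
  · left
    exact (Done.of_rel u1 (ZL u (by grind) hz.1 hz.2)).mono (by omega)
  by_cases hz2 : g.r u (g.m - 1) = g.x u 0 ∧ g.C (g.m - 1) (g.r s (g.m-1))
  · right
    exact ⟨u, u1, hz2.1, by grind, hz2.2, by have := p4 0 (by omega); grind, by grind⟩
  left
  have hxm := g.hx s (g.m - 1) (by omega)
  refine (Done.of_rel u1 (W0 u (by grind) ?_ ?_)).mono (by omega)
  · intro i hi hi'
    have q1 := p2 i hi
    have q2 := p3 i hi
    have q3 := p4 i hi
    have q5 := h2 i hi
    by_cases i = 0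
    · unfold St; grind
    by_cases i = g.m - 1
    · unfold St at *; grind
    unfold St at *; grind
  · have q5 := h2 1 (by omega) (by omega)
    by_cases g.m = 2
    · unfold St at *; grind
    · unfold St at *; grind

theorem mir_rot_facts (h : 0 < g.m) : ri g.m 1 (g.m - 1) = 0 := by
  unfold ri; split <;> omega

/-- mirror of `baseL` fixing the base -/
theorem baseR (s : S) (h2 : ∀ i, i < g.m → i ≠ 0 → g.St s i) (h0 : ¬ g.St s 0)
    (hc : g.C 0 (g.r s 0)) : g.Done (9 * (g.m * g.m)) s ∨
    ∃ t, g.Rel s t ∧ g.l t 1 = g.x t 0 ∧ ¬ g.C 1 (g.x t 0) ∧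
      (g.C 1 (g.l s 1)) ∧ g.l t 0 = g.l s 0 ∧
      (g.r t (g.m - 1) = g.r s (g.m - 1) ∨ g.r t (g.m - 1) = g.x t 0) := by
  have hm := g.hm
  have e1 : ri g.m 1 (g.m - 1) = 0 := by unfold ri; split <;> omega
  have e2 : ri g.m 1 0 = 1 := by unfold ri; split <;> omega
  have e3 : ri g.m 1 (g.m - 1 - 1) = g.m - 1 := by unfold ri; split <;> omega
  have hSt : ∀ i, ((g.rot 1 hm).mir).St s i ↔ g.St s (ri g.m 1 (g.m - 1 - i)) := by
    intro i; rw [mir_St]; rfl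
  have z1 : ∀ i, i < ((g.rot 1 hm).mir).m → i ≠ 0 → ((g.rot 1 hm).mir).St s i := by
    intro i hi hi'
    change i < g.m at hi
    rw [hSt]
    exact h2 _ (by unfold ri; split <;> omega) (by unfold ri; split <;> omega)
  have z2 : ¬ ((g.rot 1 hm).mir).St s 0 := by
    rw [hSt, Nat.sub_zero, e1]; exact h0
  have z3 : ((g.rot 1 hm).mir).C 0 (((g.rot 1 hm).mir).l s 0) := by
    change g.C (ri g.m 1 (g.m - 1 - 0)) (g.r s (ri g.m 1 (g.m - 1 - 0)))
    simpa [e1] using hc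
  rcases baseL (g := (g.rot 1 hm).mir) s z1 z2 z3 with h | ⟨t, t1, t2, t3, t4, t5, t6⟩
  · exact Or.inl h.of_mir.of_rot
  · right
    refine ⟨t, t1, ?_, ?_, ?_, ?_, ?_⟩
    · change g.l t (ri g.m 1 (g.m - 1 - (g.m - 1))) = g.x t (ri g.m 1 (g.m - 1 - 0)) at t2
      simpa [e1, e2] using t2
    · change ¬ g.C (ri g.m 1 (g.m - 1 - (g.m - 1))) (g.x t (ri g.m 1 (g.m - 1 - 0))) at t3
      simpa [e1, e2] using t3
    · change g.C (ri g.m 1 (g.m - 1 - (g.m - 1))) (g.l s (ri g.m 1 (g.m - 1 - (g.m - 1)))) at t4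
      simpa [e1, e2] using t4
    · change g.l t (ri g.m 1 (g.m - 1 - 0)) = g.l s (ri g.m 1 (g.m - 1 - 0)) at t5
      simpa [e1, e2] using t5
    · change g.r t (ri g.m 1 (g.m - 1 - 1)) = g.r s (ri g.m 1 (g.m - 1 - 1)) ∨
        g.r t (ri g.m 1 (g.m - 1 - 1)) = g.x t (ri g.m 1 (g.m - 1 - 0)) at t6
      simpa [e1, e3] using t6

/-- everything when the first base move is a left move -/
theorem mainL (s : S) (h2 : ∀ i, i < g.m → i ≠ 0 → g.St s i) (h0 : ¬ g.St s 0)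
    (hc : g.C 0 (g.l s 0)) : g.Done (30 * (g.m * g.m)) s := by
  have hm := g.hm
  have hN := g.sq_facts
  rcases baseL s h2 h0 hc with h | ⟨t, t1, t2, t3, -⟩
  · exact h.mono (by omega)
  obtain ⟨u, u1, u2, u3⟩ := g.line (b := g.m) le_rfl t
  obtain ⟨c1, c2, c3, -⟩ := u3
  refine (Done.of_rel t1 (Done.of_rch u1 (?_ : g.Done (25 * (g.m * g.m)) u))).mono (by omega)
  have hu : ¬ g.C (g.m - 1) (g.r u (g.m-1)) := by grind
  clear c1 c2 c3 u1 t1 t2 t3 h2 h0 hc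
  have u2' : ∀ i, i < g.m → i ≠ 0 → g.St u i := fun i hi hi' => u2 i (by omega) hi
  by_cases h0 : g.St u 0
  · exact ⟨u, Rch.refl _ _, by grind⟩
  by_cases hl : g.C 0 (g.l u 0)
  · rcases baseL u u2' h0 hl with h | ⟨_, _, _, _, h⟩
    · exact h.mono (by omega)
    · exact absurd h.1 hu
  have hr : g.C 0 (g.r u 0) := by unfold St at h0; grind
  rcases baseR u u2' h0 hr with h | ⟨t, t1, t2, t3, -, t5, t6⟩
  · exact h.mono (by omega)
  have tl : ¬ g.C 0 (g.l t 0) := by rw [t5]; exact hl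
  refine (Done.of_rel t1 (?_ : g.Done (20 * (g.m * g.m)) t)).mono (by omega)
  -- closing lemma
  have fin : ∀ v, (∀ i, i < g.m → i ≠ 0 → g.St v i) → ¬ g.C 0 (g.l v 0) → ¬ g.C 1 (g.l v 1) →
      g.Done (9 * (g.m * g.m)) v := by
    intro v v1 v2 v3
    by_cases v0 : g.St v 0
    · refine ⟨v, Rch.refl _ _, fun i hi => ?_⟩
      by_cases hi0 : i = 0
      · rw [hi0]; exact v0
      · exact v1 i hi hi0
    have hr : g.C 0 (g.r v 0) := by unfold St at v0; grind
    rcases baseR v v1 v0 hr with h | ⟨_, _, _, _, h, _⟩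
    · exact h
    · exact absurd h v3
  by_cases hrt : g.C (g.m - 1) (g.r t (g.m - 1))
  · have hrx : g.r t (g.m - 1) = g.x t 0 := by
      rcases t6 with h | h
      · rw [h] at hrt; exact absurd hrt hu
      · exact h
    obtain ⟨v, v1, v2, v3⟩ := g.line (b := g.m - 1) (by omega) t
    obtain ⟨d1, d2, d3, d4⟩ := v3
    obtain ⟨d4, d5⟩ := d4 (by omega)
    have vl1 : ¬ g.C 1 (g.l v 1) := by rw [d2, t2]; exact t3
    have vl0 : ¬ g.C 0 (g.l v 0) := by rw [d5]; exact tl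
    by_cases hs : g.St v (g.m - 1)
    · refine (Done.of_rch v1 (fin v ?_ vl0 vl1)).mono (by omega)
      intro i hi hi0
      by_cases him : i = g.m - 1
      · rw [him]; exact hs
      · exact v2 i (by omega) (by omega)
    have hm3 : 1 ≠ g.m - 1 := by
      intro h
      rw [← h] at hrt hrx
      rw [hrx] at hrt
      exact t3 hrt
    obtain ⟨w, w1, p1, p2, p3, p4⟩ := moveR (by omega) hs (by rw [d3]; exact hrt)
    have q0 := p2 0 (by omega) (by omega)
    have ql0 := p3 0 (by omega)
    have ql1 := p3 1 (by omega)
    have qr := p4 (g.m - 1) (by omega)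
    have qr' : g.r w (g.m - 1) = g.r v (g.m - 1) := by
      rcases qr with h | h
      · exact h
      · exact h.1
    have ql1' : g.l w 1 = g.l v 1 := by
      rcases ql1 with h | h
      · exact h
      · omega
    obtain ⟨y, y1, y2, y3⟩ := g.line (b := g.m - 1) (by omega) w
    obtain ⟨f1, f2, f3, f4⟩ := y3
    obtain ⟨f4, f5⟩ := f4 (by omega)
    have yst : ∀ i, i < g.m → i ≠ 0 → g.St y i := by
      intro i hi hi0
      by_cases him : i = g.m - 1
      · rw [him]; right; left; rw [f4, p1, f3, qr']
      · exact y2 i (by omega) (by omega)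
    refine (Done.of_rch v1 (Done.of_rel w1 (Done.of_rch y1
      (?_ : g.Done (9 * (g.m * g.m)) y)))).mono (by omega)
    rcases ql0 with h | h
    · exact fin y yst (by rw [f5, h]; exact vl0) (by rw [f2, ql1']; exact vl1)
    · refine ⟨y, Rch.refl _ _, fun i hi => ?_⟩
      by_cases hi0 : i = 0
      · rw [hi0]; left; rw [f1, q0, d1, f5, h.1, d3, hrx]
      · exact yst i hi hi0
  · obtain ⟨v, v1, v2, v3⟩ := g.line (b := g.m) le_rfl t
    obtain ⟨d1, d2, d3, -⟩ := v3
    have v2' : ∀ i, i < g.m → i ≠ 0 → g.St v i := fun i hi hi' => v2 i (by omega) hi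
    have vl1 : ¬ g.C 1 (g.l v 1) := by rw [d2, t2]; exact t3
    have vr : ¬ g.C (g.m - 1) (g.r v (g.m - 1)) := by rw [d3]; exact hrt
    refine (Done.of_rch v1 (?_ : g.Done (9 * (g.m * g.m)) v)).mono (by omega)
    by_cases h0v : g.St v 0
    · refine ⟨v, Rch.refl _ _, fun i hi => ?_⟩
      by_cases hi0 : i = 0
      · rw [hi0]; exact h0v
      · exact v2' i hi hi0
    by_cases hlv : g.C 0 (g.l v 0)
    · rcases baseL v v2' h0v hlv with h | ⟨_, _, _, _, h, _⟩
      · exact h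
      · exact absurd h vr
    · exact fin v v2' hlv vl1

theorem main (s : S) : g.Done (40 * (g.m * g.m)) s := by
  have hm := g.hm
  have hN := g.sq_facts
  obtain ⟨u, u1, u2, -⟩ := g.line (b := g.m) le_rfl s
  have u2' : ∀ i, i < g.m → i ≠ 0 → g.St u i := fun i hi hi' => u2 i (by omega) hi
  refine (Done.of_rch u1 (?_ : g.Done (30 * (g.m * g.m)) u)).mono (by omega)
  by_cases h0 : g.St u 0
  · refine ⟨u, Rch.refl _ _, fun i hi => ?_⟩
    by_cases hi0 : i = 0
    · rw [hi0]; exact h0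
    · exact u2' i hi hi0
  by_cases hl : g.C 0 (g.l u 0)
  · exact mainL u u2' h0 hl
  have hr : g.C 0 (g.r u 0) := by unfold St at h0; grind
  have e1 : ri g.m 1 (g.m - 1) = 0 := by unfold ri; split <;> omega
  have hSt : ∀ i, ((g.rot 1 hm).mir).St u i ↔ g.St u (ri g.m 1 (g.m - 1 - i)) := by
    intro i; rw [mir_St]; rfl
  refine (mainL (g := (g.rot 1 hm).mir) u ?_ ?_ ?_).of_mir.of_rot
  · intro i hi hi'
    change i < g.m at hi
    rw [hSt]
    exact u2' _ (by unfold ri; split <;> omega) (by unfold ri; split <;> omega)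
  · rw [hSt, Nat.sub_zero, e1]; exact h0
  · change g.C (ri g.m 1 (g.m - 1 - 0)) (g.r u (ri g.m 1 (g.m - 1 - 0)))
    simpa [e1] using hr

end RG

section Conc
variable {V M : Type} [Fintype V]

inductive CR (adj : V → V → Prop) (C : V → Finset M) : ℕ → (V → M) → (V → M) → Prop
  | refl (k s) : CR adj C k s s
  | step (k s t u) : UniDev adj (fun _ _ => 1) (fun _ _ => 0) C s t → CR adj C k t u →
      CR adj C (k+1) s u

variable {adj : V → V → Prop} {C : V → Finset M}

theorem CR.mono {k k' : ℕ} {s t : V → M} (h : CR adj C k s t) (hk : k ≤ k') :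
    CR adj C k' s t := by
  induction h generalizing k' with
  | refl k s => exact CR.refl _ _
  | step k s t u h1 h2 ih =>
    obtain ⟨q, rfl⟩ : ∃ q, k' = q + 1 := ⟨k' - 1, by omega⟩
    exact CR.step _ _ _ _ h1 (ih (by omega))

theorem CR.trans {k k' : ℕ} {s t u : V → M} (h : CR adj C k s t) (h' : CR adj C k' t u) :
    CR adj C (k + k') s u := by
  induction h with
  | refl k s => exact h'.mono (by omega)
  | step k s t u h1 h2 ih =>
    have := CR.step _ _ _ _ h1 (ih h')
    exact this.mono (by omega)

theorem CR.impPath {k : ℕ} {s t : V → M} (h : CR adj C k s t)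
    (ht : IsNash adj (fun _ _ => 1) (fun _ _ => 0) C t) :
    ∃ L, L ≤ k ∧ ImpPath adj (fun _ _ => 1) (fun _ _ => 0) C s L := by
  induction h with
  | refl k s => exact ⟨0, by omega, fun _ => s, rfl, by simp, ht⟩
  | step k s t u h1 h2 ih =>
    obtain ⟨L, hL, σ, h3, h4, h5⟩ := ih ht
    refine ⟨L + 1, by omega, fun q => Nat.casesOn q s σ, rfl, ?_, h5⟩
    intro q hq
    cases q with
    | zero => change UniDev _ _ _ _ s (σ 0); rw [h3]; exact h1
    | succ q => exact h4 q (by omega)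

theorem payoff_card (s : V → M) (i : V) :
    payoff adj (fun _ _ => 1) (fun _ _ => 0) s i =
      ((Finset.univ.filter (fun j => adj j i ∧ s j = s i)).card : ℝ) := by
  simp [payoff]

theorem uniDev_of {s : V → M} {a u : V} {c : M} (hs : Valid C s) (h1 : ∀ w, adj w a → s w ≠ s a)
    (hu : adj u a) (hc : s u = c) (hC : c ∈ C a) :
    UniDev adj (fun _ _ => 1) (fun _ _ => 0) C s (Function.update s a c) := by
  have hne : c ≠ s a := hc ▸ h1 u hu
  have hua : u ≠ a := by rintro rfl; exact h1 u hu rfl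
  refine ⟨⟨?_, ?_, ?_⟩, a, ?_⟩
  · intro i
    by_cases hi : i = a
    · subst hi; simpa using hC
    · simpa [hi] using hs i
  · intro h
    have := congrFun h a
    simp at this; exact hne this.symm
  · intro i hi
    have hia : i = a := by
      by_contra hia; simp [hia] at hi
    subst hia
    rw [payoff_card, payoff_card]
    have e1 : (Finset.univ.filter (fun j => adj j i ∧ s j = s i)) = ∅ := by
      ext w; simp; exact h1 w
    rw [e1]
    simp only [Finset.card_empty, Nat.cast_zero, Nat.cast_pos, Finset.card_pos]
    exact ⟨u, by simp [hu, hua, hc]⟩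
  · intro j hj; simp [hj]

theorem nash_of {s : V → M} (hs : Valid C s) (h : ∀ a, ∃ u v, (∀ w, adj w a ↔ w = u ∨ w = v) ∧
    u ≠ a ∧ v ≠ a ∧ (s a = s u ∨ s a = s v ∨ (s u ∉ C a ∧ s v ∉ C a))) :
    IsNash adj (fun _ _ => 1) (fun _ _ => 0) C s := by
  refine ⟨hs, ?_⟩
  rintro s' ⟨⟨h1, h2, h3⟩, i, h4⟩
  have hi : s i ≠ s' i := by
    intro hi; apply h2; ext j
    by_cases hj : j = i
    · rw [hj, hi]
    · exact h4 j hj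
  have h5 := h3 i hi
  rw [payoff_card, payoff_card, Nat.cast_lt] at h5
  obtain ⟨u, v, hw, hu, hv, hd⟩ := h i
  have eu := h4 u hu
  have ev := h4 v hv
  have key : ∀ u v : V, (∀ w, adj w i ↔ w = u ∨ w = v) → s u = s' u → s i = s u → False := by
    intro u v hw eu hd
    have a1 : 1 ≤ (Finset.univ.filter (fun j => adj j i ∧ s j = s i)).card := by
      rw [Nat.one_le_iff_ne_zero, ← Nat.pos_iff_ne_zero, Finset.card_pos]
      exact ⟨u, by simp [hw, hd]⟩
    have a2 : (Finset.univ.filter (fun j => adj j i ∧ s' j = s' i)).card ≤ 1 := by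
      have : (Finset.univ.filter (fun j => adj j i ∧ s' j = s' i)) ⊆ {v} := by
        intro w hw'
        simp only [Finset.mem_filter, Finset.mem_univ, true_and, hw] at hw'
        rcases hw' with ⟨h | h, h'⟩
        · subst h; exact absurd (hd.trans (eu.trans h')) hi
        · simpa using h
      exact (Finset.card_le_card this).trans (by simp)
    omega
  rcases hd with hd | hd | hd
  · exact key u v hw eu hd
  · exact key v u (fun w => (hw w).trans or_comm) ev hd
  · have : (Finset.univ.filter (fun j => adj j i ∧ s' j = s' i)) = ∅ := by
      ext w
      simp only [Finset.mem_filter, Finset.mem_univ, true_and, hw, Finset.notMem_empty, iff_false]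
      have hi' := h1 i
      rintro ⟨h | h, h'⟩
      · subst h; rw [eu, h'] at hd; exact hd.1 hi'
      · subst h; rw [ev, h'] at hd; exact hd.2 hi'
    rw [this] at h5; simp at h5

/-- settledness of the edge `u → v` -/
def Se (C : V → Finset M) (s : V → M) (u v : V) : Prop := s v = s u ∨ s u ∉ C v

theorem flush (v : ℕ → V) : ∀ (L : ℕ) (s : V → M), Valid C s →
    (∀ t, t < L → ∀ u, adj u (v (t+1)) ↔ u = v t) →
    (∀ t t', t ≤ L → t' ≤ L → v t = v t' → t = t') →
    ∃ s', CR adj C L s s' ∧ Valid C s' ∧ (∀ u, (∀ t, t < L → u ≠ v (t+1)) → s' u = s u) ∧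
      (∀ t, t < L → Se C s' (v t) (v (t+1))) ∧
      ((∀ t, 1 ≤ t → t < L → Se C s (v t) (v (t+1))) → s' (v L) = s (v L) ∨ s' (v L) = s (v 0)) := by
  intro L
  induction L with
  | zero =>
    intro s hs _ _
    exact ⟨s, CR.refl _ _, hs, by simp, by simp, fun _ => Or.inl rfl⟩
  | succ L ih =>
    intro s hs h1 h2
    obtain ⟨s', a1, a2, a3, a4, a5⟩ := ih s hs (fun t ht => h1 t (by omega))
      (fun t t' ht ht' => h2 t t' (by omega) (by omega))
    have b1 : s' (v (L+1)) = s (v (L+1)) := by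
      apply a3; intro t ht h
      have := h2 _ _ (by omega) (by omega) h; omega
    have b0 : s' (v 0) = s (v 0) := by
      apply a3; intro t ht h
      have := h2 _ _ (by omega) (by omega) h; omega
    by_cases hse : Se C s' (v L) (v (L+1))
    · refine ⟨s', a1.mono (by omega), a2, fun u hu => a3 u (fun t ht => hu t (by omega)), ?_,
        fun _ => Or.inl b1⟩
      intro t ht
      by_cases htL : t = L
      · rw [htL]; exact hse
      · exact a4 t (by omega)
    · have hse' := hse
      unfold Se at hse; push Not at hse
      have dev := uniDev_of (adj := adj) (C := C) (s := s') (a := v (L+1)) (u := v L) (c := s' (v L)) a2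
        (by intro w hw; rw [(h1 L (by omega) w).1 hw]; exact hse.1.symm)
        ((h1 L (by omega) _).2 rfl) rfl hse.2
      refine ⟨_, (a1.trans (CR.step 0 _ _ _ dev (CR.refl _ _))).mono (by omega), dev.1.1, ?_, ?_, ?_⟩
      · intro u hu
        rw [Function.update_of_ne (hu L (by omega))]
        exact a3 u (fun t ht => hu t (by omega))
      · intro t ht
        have n1 : v t ≠ v (L+1) := fun h => by have := h2 _ _ (by omega) (by omega) h; omega
        by_cases htL : t = L
        · subst htL; unfold Se; left; simp [n1]
        · have n2 : v (t+1) ≠ v (L+1) := fun h => by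
            have := h2 _ _ (by omega) (by omega) h; omega
          have := a4 t (by omega)
          unfold Se at this ⊢
          rwa [Function.update_of_ne n1, Function.update_of_ne n2]
      · intro hst
        right
        rw [Function.update_self]
        rcases a5 (fun t ht ht' => hst t ht (by omega)) with h | h
        · by_cases hL : L = 0
          · subst hL; exact b0
          exfalso
          have := hst L (by omega) (by omega)
          unfold Se at this hse'
          rw [b1, h] at hse'
          exact hse' this
        · exact h
end Conc

structure Ch {V : Type} (adj : V → V → Prop) (m n : ℕ) (node : ℕ → ℕ → V) (nx K : ℕ → ℕ) : Prop where
  hm : 2 ≤ m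
  hn : 3 ≤ n
  nxlt : ∀ j, j < m → nx j < m
  nxne : ∀ j, j < m → nx j ≠ j
  nxinj : ∀ j j', j < m → j' < m → nx j = nx j' → j = j'
  nxsurj : ∀ j, j < m → ∃ j', j' < m ∧ nx j' = j
  hK1 : ∀ j, j < m → 1 ≤ K j
  hK2 : ∀ j, j < m → K j < n
  glue : ∀ j, j < m → node j 0 = node (nx j) (K (nx j))
  intr : ∀ j p j' p', j < m → j' < m → 1 ≤ p → p < n → p ≠ K j → p' < n → node j p = node j' p' →
    j = j' ∧ p = p'
  jun : ∀ j j' p', j < m → j' < m → p' < n → node j 0 = node j' p' →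
    (j' = j ∧ p' = 0) ∨ (j' = nx j ∧ p' = K j')
  surj : ∀ v, ∃ j p, j < m ∧ p < n ∧ node j p = v
  aint : ∀ j p, j < m → 1 ≤ p → p < n → p ≠ K j → ∀ u, adj u (node j p) ↔ u = node j (p-1)
  ajun : ∀ j, j < m → ∀ u, adj u (node j 0) ↔ u = node j (n-1) ∨ u = node (nx j) (K (nx j) - 1)

theorem ch_of {V : Type} {m n : ℕ} {node : ℕ → ℕ → V} {k : ℕ → ℕ} (h : IsClosedChain m n node k) :
    Ch (chainAdj m n node) m n node (fun j => if j + 1 < m then j + 1 else 0)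
      (fun j => k (if j = 0 then m - 1 else j - 1)) := by
  obtain ⟨hm, hn, hk, hg, hg', hi, hs⟩ := h
  have intr : ∀ j p j' p', j < m → j' < m → 1 ≤ p → p < n → p ≠ k (if j = 0 then m - 1 else j - 1) →
      p' < n → node j p = node j' p' → j = j' ∧ p = p' := by
    intro j p j' p' hj hj' hp hp' hpk hpn he
    rcases hi j p j' p' hj hp' hj' hpn he with h | h | h | h | h
    · exact h
    · omega
    · exfalso; apply hpk; rw [h.2.2, if_neg (by omega)]; congr 1; omega
    · omega
    · exfalso; apply hpk; rw [h.2.2.2, if_pos (by omega)]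
  have jun : ∀ j j' p', j < m → j' < m → p' < n → node j 0 = node j' p' →
    (j' = j ∧ p' = 0) ∨ (j' = (if j + 1 < m then j + 1 else 0) ∧
      p' = k (if j' = 0 then m - 1 else j' - 1)) := by
    intro j j' p' hj hj' hp' he
    rcases hi j 0 j' p' hj (by omega) hj' hp' he with h | h | h | h | h
    · left; omega
    · right
      rw [if_pos (by omega), if_neg (by omega), h.1]; exact ⟨rfl, h.2.2⟩
    · have := hk j' hj'; omega
    · right
      rw [if_neg (by omega), if_pos (by omega)]; exact ⟨h.2.1, h.2.2.2⟩
    · have := hk (m-1) (by omega); omega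
  have glue : ∀ j, j < m → node j 0 = node (if j + 1 < m then j + 1 else 0)
      (k (if (if j + 1 < m then j + 1 else 0) = 0 then m - 1 else (if j + 1 < m then j + 1 else 0) - 1)) := by
    intro j hj
    by_cases hjm : j + 1 < m
    · simp only [if_pos hjm, if_neg (Nat.succ_ne_zero j), Nat.add_sub_cancel]; exact hg j hjm
    · simp only [if_neg hjm, if_true]
      rw [← hg']; congr 1; omega
  have kK : ∀ j, j < m → 1 ≤ k (if j = 0 then m - 1 else j - 1) ∧ k (if j = 0 then m - 1 else j - 1) < n :=
    fun j hj => hk _ (by split <;> omega)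
  have md : ∀ i, i < n → (i + 1) % n = if i + 1 < n then i + 1 else 0 := by
    intro i hi
    split
    · exact Nat.mod_eq_of_lt (by assumption)
    · rw [show i + 1 = n by omega, Nat.mod_self]
  refine ⟨hm, hn, ?_, ?_, ?_, ?_, fun j hj => (kK j hj).1, fun j hj => (kK j hj).2, glue, intr, jun, hs, ?_, ?_⟩
  · intro j hj; split <;> omega
  · intro j hj; split <;> omega
  · intro j j' hj hj'; split <;> split <;> omega
  · intro j hj
    refine ⟨if j = 0 then m - 1 else j - 1, by split <;> omega, ?_⟩
    split <;> split <;> omega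
  · intro j p hj hp hp' hpk u
    constructor
    · rintro ⟨j', i', hj', hi', rfl, he⟩
      rw [md i' hi'] at he
      obtain ⟨e1, e2⟩ := intr j p j' _ hj hj' hp hp' hpk (by split <;> omega) he
      rw [e1]; congr 1; split at e2 <;> omega
    · rintro rfl
      exact ⟨j, p - 1, hj, by omega, rfl, by rw [md _ (by omega), if_pos (by omega)]; congr 1; omega⟩
  · intro j hj u
    constructor
    · rintro ⟨j', i', hj', hi', rfl, he⟩
      rw [md i' hi'] at he
      rcases jun j j' _ hj hj' (by split <;> omega) he with ⟨e1, e2⟩ | ⟨e1, e2⟩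
      · left; rw [e1]; congr 1; split at e2 <;> omega
      · right
        have := (kK j' hj').1
        rw [← e1]; congr 1; split at e2 <;> omega
    · have hnx : (if j + 1 < m then j + 1 else 0) < m := by split <;> omega
      have hh := kK _ hnx
      rintro (rfl | rfl)
      · exact ⟨j, n - 1, hj, by omega, rfl, by rw [md _ (by omega), if_neg (by omega)]⟩
      · refine ⟨_, _, hnx, ?_, rfl, ?_⟩
        · omega
        · rw [Nat.sub_add_cancel hh.1, Nat.mod_eq_of_lt hh.2]
          exact glue j hj

section Ch
variable {V M : Type} [Fintype V] {adj : V → V → Prop} {m n : ℕ} {node : ℕ → ℕ → V} {nx K : ℕ → ℕ}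
  {C : V → Finset M}

def CleanAt (C : V → Finset M) (n : ℕ) (node : ℕ → ℕ → V) (K : ℕ → ℕ) (s : V → M) (j : ℕ) : Prop :=
  ∀ p, 1 ≤ p → p < n → p ≠ K j → Se C s (node j (p-1)) (node j p)

/-- flush the first pipe of cycle `j` -/
theorem flush1 (H : Ch adj m n node nx K) {s : V → M} (hs : Valid C s) {j : ℕ} (hj : j < m) :
    ∃ s', CR adj C (K j - 1) s s' ∧ Valid C s' ∧
      (∀ u, (∀ p, 1 ≤ p → p < K j → u ≠ node j p) → s' u = s u) ∧
      (∀ p, 1 ≤ p → p < K j → Se C s' (node j (p-1)) (node j p)) ∧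
      ((∀ p, 2 ≤ p → p < K j → Se C s (node j (p-1)) (node j p)) →
        s' (node j (K j - 1)) = s (node j (K j - 1)) ∨ s' (node j (K j - 1)) = s (node j 0)) := by
  have hk1 := H.hK1 j hj
  have hk2 := H.hK2 j hj
  obtain ⟨s', a1, a2, a3, a4, a5⟩ := flush (adj := adj) (C := C) (fun t => node j t) (K j - 1) s hs
    (by
      intro t ht u
      have := H.aint j (t+1) hj (by omega) (by omega) (by omega) u
      simpa using this)
    (by
      intro t t' ht ht' he
      by_cases h0 : t = 0
      · by_cases h0' : t' = 0
        · omega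
        · have := H.intr j t' j t hj hj (by omega) (by omega) (by omega) (by omega) he.symm
          omega
      · have := H.intr j t j t' hj hj (by omega) (by omega) (by omega) (by omega) he
        omega)
  refine ⟨s', a1, a2, ?_, ?_, ?_⟩
  · intro u hu
    exact a3 u (fun t ht => hu (t+1) (by omega) (by omega))
  · intro p hp hp'
    have := a4 (p-1) (by omega)
    rwa [Nat.sub_add_cancel hp] at this
  · intro hh
    apply a5
    intro t ht ht'
    have := hh (t+1) (by omega) (by omega)
    simpa using this

/-- flush the second pipe of cycle `j` -/
theorem flush2 (H : Ch adj m n node nx K) {s : V → M} (hs : Valid C s) {j : ℕ} (hj : j < m) :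
    ∃ s', CR adj C (n - 1 - K j) s s' ∧ Valid C s' ∧
      (∀ u, (∀ p, K j < p → p < n → u ≠ node j p) → s' u = s u) ∧
      (∀ p, K j < p → p < n → Se C s' (node j (p-1)) (node j p)) ∧
      ((∀ p, K j + 2 ≤ p → p < n → Se C s (node j (p-1)) (node j p)) →
        s' (node j (n - 1)) = s (node j (n - 1)) ∨ s' (node j (n - 1)) = s (node j (K j))) := by
  have hk1 := H.hK1 j hj
  have hk2 := H.hK2 j hj
  obtain ⟨s', a1, a2, a3, a4, a5⟩ := flush (adj := adj) (C := C) (fun t => node j (K j + t)) (n - 1 - K j) s hs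
    (by
      intro t ht u
      have := H.aint j (K j + (t+1)) hj (by omega) (by omega) (by omega) u
      simpa using this)
    (by
      intro t t' ht ht' he
      by_cases h0 : t = 0
      · by_cases h0' : t' = 0
        · omega
        · have := H.intr j (K j + t') j (K j + t) hj hj (by omega) (by omega) (by omega) (by omega) he.symm
          omega
      · have := H.intr j (K j + t) j (K j + t') hj hj (by omega) (by omega) (by omega) (by omega) he
        omega)
  refine ⟨s', a1, a2, ?_, ?_, ?_⟩
  · intro u hu
    exact a3 u (fun t ht => hu (K j + (t+1)) (by omega) (by omega))
  · intro p hp hp'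
    have := a4 (p-1-K j) (by omega)
    rwa [show K j + (p - 1 - K j) = p - 1 by omega, show K j + (p - 1 - K j + 1) = p by omega] at this
  · intro hh
    have := a5 (by
      intro t ht ht'
      have := hh (K j + (t+1)) (by omega) (by omega)
      simpa using this)
    rwa [show K j + (n - 1 - K j) = n - 1 by omega] at this

theorem clean_init (H : Ch adj m n node nx K) {s : V → M} (hs : Valid C s) : ∀ J, J ≤ m →
    ∃ s', CR adj C (J * n) s s' ∧ Valid C s' ∧ ∀ j, j < J → CleanAt C n node K s' j := by
  intro J
  induction J with
  | zero => intro _; exact ⟨s, CR.refl _ _, hs, by simp⟩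
  | succ J ih =>
    intro hJ
    obtain ⟨s0, a1, a2, a3⟩ := ih (by omega)
    obtain ⟨s1, b1, b2, b3, b4, -⟩ := flush1 H a2 (j := J) (by omega)
    obtain ⟨s2, c1, c2, c3, c4, -⟩ := flush2 H b2 (j := J) (by omega)
    have hk1 := H.hK1 J hJ
    have hk2 := H.hK2 J hJ
    refine ⟨s2, (a1.trans (b1.trans c1)).mono ?_, c2, ?_⟩
    · rw [Nat.succ_mul]; omega
    · intro j hj p hp hp' hpk
      have u2 : ∀ q, q < n → (j = J → q ≤ K J) → s2 (node j q) = s1 (node j q) := by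
        intro q hq hjq
        apply c3; intro p' h1 h2 he
        have := H.intr J p' j q hJ (by omega) (by omega) (by omega) (by omega) hq he.symm
        omega
      by_cases hjJ : j = J
      · subst hjJ
        by_cases hpl : p < K j
        · have := b4 p hp hpl
          unfold Se at this ⊢
          rwa [u2 _ (by omega) (by omega), u2 _ (by omega) (by omega)]
        · exact c4 p (by omega) hp'
      · have u1 : ∀ q, q < n → s1 (node j q) = s0 (node j q) := by
          intro q hq
          apply b3; intro p' h1 h2 he
          have := H.intr J p' j q hJ (by omega) (by omega) (by omega) (by omega) hq he.symm
          omega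
        have := a3 j (by omega) p hp hp' hpk
        unfold Se at this ⊢
        rwa [u2 _ (by omega) (by omega), u2 _ (by omega) (by omega), u1 _ (by omega), u1 _ (by omega)]

theorem cmove (H : Ch adj m n node nx K) {s : V → M} (hs : Valid C s)
    (hcl : ∀ j, j < m → CleanAt C n node K s j) {i : ℕ} (hi : i < m) {c : M}
    (h1 : s (node i 0) ≠ s (node i (n-1))) (h2 : s (node i 0) ≠ s (node (nx i) (K (nx i) - 1)))
    (hc : c = s (node i (n-1)) ∨ c = s (node (nx i) (K (nx i) - 1))) (hC : c ∈ C (node i 0)) :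
    ∃ s', CR adj C (2 * n + 1) s s' ∧ Valid C s' ∧ (∀ j, j < m → CleanAt C n node K s' j) ∧
      s' (node i 0) = c ∧ (∀ j, j < m → j ≠ i → s' (node j 0) = s (node j 0)) ∧
      (∀ j, j < m → s' (node j (n-1)) = s (node j (n-1)) ∨ (s' (node j (n-1)) = c ∧ j = nx i)) ∧
      (∀ j, j < m → s' (node (nx j) (K (nx j) - 1)) = s (node (nx j) (K (nx j) - 1)) ∨
        (s' (node (nx j) (K (nx j) - 1)) = c ∧ nx j = i)) := by
  have hn := H.hn
  have hxi := H.nxlt i hi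
  have hne := H.nxne i hi
  have k1 := H.hK1 i hi
  have k2 := H.hK2 i hi
  have k3 := H.hK1 _ hxi
  have k4 := H.hK2 _ hxi
  have hgl := H.glue i hi
  obtain ⟨u, hu, huc⟩ : ∃ u, adj u (node i 0) ∧ s u = c := by
    rcases hc with h | h
    · exact ⟨_, (H.ajun i hi _).2 (Or.inl rfl), h.symm⟩
    · exact ⟨_, (H.ajun i hi _).2 (Or.inr rfl), h.symm⟩
  have dev := uniDev_of (adj := adj) (C := C) (s := s) (a := node i 0) (u := u) (c := c) hs
    (by
      intro w hw
      rcases (H.ajun i hi w).1 hw with rfl | rfl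
      · exact h1.symm
      · exact h2.symm) hu huc hC
  obtain ⟨s1, es1⟩ : ∃ s1, s1 = Function.update s (node i 0) c := ⟨_, rfl⟩
  rw [← es1] at dev
  obtain ⟨s2, b1, b2, b3, b4, b5⟩ := flush1 H dev.1.1 hi
  obtain ⟨s3, c1, c2, c3, c4, c5⟩ := flush2 H b2 hxi
  have v1 : s1 (node i 0) = c := by rw [es1]; simp
  have v1' : ∀ w, w ≠ node i 0 → s1 w = s w := by intro w hw; rw [es1]; simp [hw]
  -- unchanged facts
  have un1 : ∀ j q, j < m → q < n → ¬ (j = i ∧ q = 0) → ¬ (j = nx i ∧ q = K (nx i)) →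
      s1 (node j q) = s (node j q) := by
    intro j q hj hq e1 e2
    apply v1'
    intro he
    rcases H.jun i j q hi hj hq he.symm with h | ⟨h, h'⟩
    · exact e1 h
    · rw [h] at h'; exact e2 ⟨h, h'⟩
  have un2 : ∀ j q, j < m → q < n → ¬ (j = i ∧ 1 ≤ q ∧ q < K i) → s2 (node j q) = s1 (node j q) := by
    intro j q hj hq e1
    apply b3; intro p h1 h2 he
    have := H.intr i p j q hi hj (by omega) (by omega) (by omega) hq he.symm
    omega
  have un3 : ∀ j q, j < m → q < n → ¬ (j = nx i ∧ K (nx i) < q) → s3 (node j q) = s2 (node j q) := by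
    intro j q hj hq e1
    apply c3; intro p h1 h2 he
    have := H.intr (nx i) p j q hxi hj (by omega) (by omega) (by omega) hq he.symm
    omega
  have x2 : s2 (node i 0) = c := by rw [un2 i 0 hi (by omega) (by omega), v1]
  have x3 : s3 (node i 0) = c := by rw [un3 i 0 hi (by omega) (by omega), x2]
  refine ⟨s3, (CR.step _ _ _ _ dev (b1.trans c1)).mono (by omega), c2, ?_, x3, ?_, ?_, ?_⟩
  · intro j hj p hp hp' hpk
    by_cases hA : j = i ∧ p < K i
    · obtain ⟨rfl, hA⟩ := hA
      have := b4 p hp hA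
      unfold Se at this ⊢
      rwa [un3 _ _ hj (by omega) (by omega), un3 _ _ hj (by omega) (by omega)]
    by_cases hB : j = nx i ∧ K (nx i) < p
    · obtain ⟨rfl, hB⟩ := hB
      exact c4 p hB hp'
    have hpk1 : j = i → p ≠ K i := by rintro rfl; exact hpk
    have hpk2 : j = nx i → p ≠ K (nx i) := by rintro rfl; exact hpk
    have := hcl j hj p hp hp' hpk
    unfold Se at this ⊢
    rwa [un3 _ _ hj (by omega) (by omega), un3 _ _ hj (by omega) (by omega),
      un2 _ _ hj (by omega) (by omega), un2 _ _ hj (by omega) (by omega),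
      un1 _ _ hj (by omega) (by omega) (by omega), un1 _ _ hj (by omega) (by omega) (by omega)]
  · intro j hj hji
    rw [un3 _ _ hj (by omega) (by omega), un2 _ _ hj (by omega) (by omega),
      un1 _ _ hj (by omega) (by omega) (by omega)]
  · intro j hj
    by_cases hjx : j = nx i
    · subst hjx
      have h := c5 (by
        intro p hp hp'
        have := hcl (nx i) hxi p (by omega) hp' (by omega)
        unfold Se at this ⊢
        rwa [un2 _ _ hj (by omega) (by omega), un2 _ _ hj (by omega) (by omega),
          un1 _ _ hj (by omega) (by omega) (by omega), un1 _ _ hj (by omega) (by omega) (by omega)])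
      rw [← hgl, x2] at h
      rcases h with h | h
      · by_cases hl : n - 1 = K (nx i)
        · right
          rw [hl, ← hgl]; exact ⟨x3, rfl⟩
        · left
          rw [h, un2 _ _ hj (by omega) (by omega), un1 _ _ hj (by omega) (by omega) (by omega)]
      · exact Or.inr ⟨h, rfl⟩
    · left
      rw [un3 _ _ hj (by omega) (by omega), un2 _ _ hj (by omega) (by omega),
        un1 _ _ hj (by omega) (by omega) (by omega)]
  · intro j hj
    have hxj := H.nxlt j hj
    have k5 := H.hK1 _ hxj
    have k6 := H.hK2 _ hxj
    by_cases hjx : nx j = i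
    · rw [hjx]
      have h := b5 (by
        intro p hp hp'
        have := hcl i hi p (by omega) (by omega) (by omega)
        unfold Se at this ⊢
        rwa [un1 _ _ hi (by omega) (by omega) (by omega), un1 _ _ hi (by omega) (by omega) (by omega)])
      rw [v1] at h
      rw [un3 _ _ hi (by omega) (by omega)]
      rcases h with h | h
      · by_cases hl : K i - 1 = 0
        · right; rw [hl]; exact ⟨x2, rfl⟩
        · left; rw [h, un1 _ _ hi (by omega) (by omega) (by omega)]
      · exact Or.inr ⟨h, rfl⟩
    · left
      have hq : nx j = nx i → K (nx j) = K (nx i) := fun h => by rw [h]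
      rw [un3 _ _ hxj (by omega) (by omega), un2 _ _ hxj (by omega) (by omega),
        un1 _ _ hxj (by omega) (by omega) (by omega)]

def conc (H : Ch adj m n node nx K) (C : V → Finset M)
    (hnx : ∀ j, j < m → nx j = if j + 1 < m then j + 1 else 0) :
    RG {s : V → M // Valid C s ∧ ∀ j, j < m → CleanAt C n node K s j} M where
  m := m
  hm := H.hm
  x s j := s.1 (node j 0)
  l s j := s.1 (node j (n-1))
  r s j := s.1 (node (nx j) (K (nx j) - 1))
  C j c := c ∈ C (node j 0)
  Rel s t := CR adj C (2 * n + 1) s.1 t.1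
  hx s i _ := s.2.1 _
  move := by
    intro s i c hi h1 h2 hc hC
    obtain ⟨s', a1, a2, a3, a4, a5, a6, a7⟩ := cmove H s.2.1 s.2.2 hi h1 h2 hc hC
    refine ⟨⟨s', a2, a3⟩, a1, a4, a5, ?_, ?_⟩
    · intro j hj
      rcases a6 j hj with h | ⟨h, h'⟩
      · exact Or.inl h
      · refine Or.inr ⟨h, ?_⟩
        rw [hnx i hi] at h'; split at h' <;> omega
    · intro j hj
      rcases a7 j hj with h | ⟨h, h'⟩
      · exact Or.inl h
      · refine Or.inr ⟨h, ?_⟩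
        rw [hnx j hj] at h'; split at h' <;> omega

theorem conc_rch (H : Ch adj m n node nx K)
    (hnx : ∀ j, j < m → nx j = if j + 1 < m then j + 1 else 0) {k : ℕ}
    {s t : {s : V → M // Valid C s ∧ ∀ j, j < m → CleanAt C n node K s j}}
    (h : (conc H C hnx).Rch k s t) : CR adj C (k * (2 * n + 1)) s.1 t.1 := by
  induction h with
  | refl k s => exact CR.refl _ _
  | step k s t u h1 h2 ih =>
    have h1' : CR adj C (2 * n + 1) s.1 t.1 := h1
    exact (h1'.trans ih).mono (le_of_eq (by ring))

theorem conc_nash (H : Ch adj m n node nx K) {s : V → M} (hs : Valid C s)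
    (hcl : ∀ j, j < m → CleanAt C n node K s j)
    (hst : ∀ i, i < m → s (node i 0) = s (node i (n-1)) ∨
      s (node i 0) = s (node (nx i) (K (nx i) - 1)) ∨
      (s (node i (n-1)) ∉ C (node i 0) ∧ s (node (nx i) (K (nx i) - 1)) ∉ C (node i 0))) :
    IsNash adj (fun _ _ => 1) (fun _ _ => 0) C s := by
  have hn := H.hn
  apply nash_of hs
  have J : ∀ i, i < m → ∃ u v, (∀ w, adj w (node i 0) ↔ w = u ∨ w = v) ∧
    u ≠ node i 0 ∧ v ≠ node i 0 ∧ (s (node i 0) = s u ∨ s (node i 0) = s v ∨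
      (s u ∉ C (node i 0) ∧ s v ∉ C (node i 0))) := by
    intro i hi
    have hxi := H.nxlt i hi
    have hne := H.nxne i hi
    have k3 := H.hK1 _ hxi
    have k4 := H.hK2 _ hxi
    refine ⟨_, _, H.ajun i hi, ?_, ?_, hst i hi⟩
    · intro he
      rcases H.jun i i (n-1) hi hi (by omega) he.symm with h | h <;> omega
    · intro he
      rcases H.jun i (nx i) (K (nx i) - 1) hi hxi (by omega) he.symm with h | h <;> omega
  intro a
  obtain ⟨j, p, hj, hp, rfl⟩ := H.surj a
  by_cases hp0 : p = 0
  · subst hp0; exact J j hj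
  by_cases hpk : p = K j
  · obtain ⟨j', hj', e⟩ := H.nxsurj j hj
    have := H.glue j' hj'
    rw [e] at this
    rw [hpk, ← this]
    exact J j' hj'
  refine ⟨node j (p-1), node j (p-1), ?_, ?_, ?_, ?_⟩
  · intro w; rw [H.aint j p hj (by omega) hp hpk w]; simp
  · intro he
    have := H.intr j p j (p-1) hj hj (by omega) hp hpk (by omega) he.symm; omega
  · intro he
    have := H.intr j p j (p-1) hj hj (by omega) hp hpk (by omega) he.symm; omega
  · rcases hcl j hj p (by omega) hp hpk with h | h
    · exact Or.inl h
    · exact Or.inr (Or.inr ⟨h, h⟩)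

end Ch

/-- There is a constant `c` such that every coordination game without bonuses
on an unweighted closed chain of `m` cycles, each cycle having `n` nodes,
admits, from every joint strategy, a finite improvement path of length at most
`c * n * m ^ 2` ending in a Nash equilibrium. -/
theorem closed_chain_improvement_path :
    ∃ c : ℕ,
      ∀ (V : Type) [Fintype V] (M : Type) [Fintype M],
      ∀ (m n : ℕ) (node : ℕ → ℕ → V) (k : ℕ → ℕ),
        IsClosedChain m n node k →
      ∀ (C : V → Finset M), (∀ i, (C i).Nonempty) →
      ∀ s : V → M, Valid C s →
        ∃ L, L ≤ c * n * m ^ 2 ∧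
          ImpPath (chainAdj m n node) (fun _ _ => 1) (fun _ _ => 0) C s L := by
  refine ⟨200, ?_⟩
  intro V _ M _ m n node k h C _ s hs
  have H := ch_of h
  have hm := H.hm
  have hn := H.hn
  obtain ⟨s0, a1, a2, a3⟩ := clean_init H hs m le_rfl
  obtain ⟨t, t1, t2⟩ := RG.main (g := conc H C (fun j _ => rfl)) ⟨s0, a2, a3⟩
  have t3 := conc_rch H _ t1
  have hN := conc_nash H t.2.1 t.2.2 t2
  obtain ⟨L, hL, hp⟩ := (a1.trans t3).impPath hN
  refine ⟨L, hL.trans ?_, hp⟩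
  change m * n + 40 * (m * m) * (2 * n + 1) ≤ 200 * n * m ^ 2
  have h1 : m * n ≤ m * m * n := Nat.mul_le_mul_right _ (Nat.le_mul_self m)
  have h2 : m * m ≤ m * m * n := Nat.le_mul_of_pos_right _ (by omega)
  nlinarith

end CG
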